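/- (One-step sifting identity of 1-D AFD.) Let f ∈ H²(𝔻) and a ∈ 𝔻. Then: (i) ⟨f, e_a⟩ = √(1−|a|²) f(a) (reproducing property); (ii) the function h(z) = (f(z) − ⟨f, e_a⟩ e_a(z)) · (1−conj(a)z)/(z−a) extends holomorphically across z = a and belongs to H²(𝔻); and (iii) ‖f‖² = (1−|a|²)|f(a)|² + ‖h‖², where norms and inner products are those of the boundary values in L²(𝕋). -/

import Mathlib

open MeasureTheory Real Complex Filter

noncomputable section

/-- The point `e^{it}` on the unit circle. -/
def bp (t : ℝ) : ℂ := Complex.exp (Complex.I * t)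

/-- The normalized Szegő kernel. -/
def szego (a z : ℂ) : ℂ := (Real.sqrt (1 - ‖a‖ ^ 2) : ℂ) / (1 - (starRingEnd ℂ) a * z)

/-- Membership in the Hardy space `H²(𝔻)`: `F` is holomorphic on the unit disc and its
circle means `(1/2π)∫₀^{2π} ‖F(r e^{it})‖² dt`, `0 ≤ r < 1`, are uniformly bounded. -/
def IsH2D (F : ℂ → ℂ) : Prop :=
  DifferentiableOn ℂ F (Metric.ball 0 1) ∧
    BddAbove (Set.range fun r : Set.Ico (0 : ℝ) 1 =>
      (1 / (2 * π)) * ∫ t in (0:ℝ)..(2 * π), ‖F (((r : ℝ) : ℂ) * bp t)‖ ^ 2)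

/-- The squared `H²(𝔻)` norm, `sup_{0≤r<1} (1/2π)∫₀^{2π} ‖F(r e^{it})‖² dt`, which equals
the squared `L²(𝕋)` norm of the boundary values of `F`. -/
def H2NormSq (F : ℂ → ℂ) : ℝ :=
  ⨆ r : Set.Ico (0 : ℝ) 1,
    (1 / (2 * π)) * ∫ t in (0:ℝ)..(2 * π), ‖F (((r : ℝ) : ℂ) * bp t)‖ ^ 2

open scoped Topology ComplexConjugate

/-- The mean of `‖F‖²` over the circle of radius `r` centred at the origin. -/
def circleMeanSq (F : ℂ → ℂ) (r : ℝ) : ℝ :=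
  circleAverage (fun z => ‖F z‖ ^ 2) 0 r

theorem bp_mul_eq_circleMap (r t : ℝ) : (r : ℂ) * bp t = circleMap 0 r t := by
  simp [bp, circleMap, mul_comm]

theorem circleMeanSq_eq_integral (F : ℂ → ℂ) (r : ℝ) :
    (1 / (2 * π)) * ∫ t in (0:ℝ)..(2 * π), ‖F ((r : ℂ) * bp t)‖ ^ 2 = circleMeanSq F r := by
  simp only [bp_mul_eq_circleMap, circleMeanSq, circleAverage_def, smul_eq_mul, one_div]

theorem sphere_abs_subset_ball {r : ℝ} (hr : |r| < 1) :
    Metric.sphere (0 : ℂ) |r| ⊆ Metric.ball 0 1 := fun z hz => by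
  rw [mem_sphere_zero_iff_norm] at hz
  rw [mem_ball_zero_iff, hz]
  exact hr

theorem ContinuousOn.circleIntegrable_of_ball {E : Type*} [NormedAddCommGroup E] {G : ℂ → E}
    (hG : ContinuousOn G (Metric.ball 0 1)) {r : ℝ} (hr : |r| < 1) : CircleIntegrable G 0 r :=
  (hG.mono (sphere_abs_subset_ball hr)).circleIntegrable'

/-- The pairing of a holomorphic function on the disc with a continuous function on a circle,
viewed as a function of the dilation parameter, is holomorphic. -/
theorem differentiableOn_integral_dilation {F : ℂ → ℂ}
    (hF : DifferentiableOn ℂ F (Metric.ball 0 1)) {c : ℝ → ℂ} (hc : Continuous c)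
    {ρ : ℝ} (hρ : ρ < 1) :
    DifferentiableOn ℂ (fun w : ℂ => ∫ t in (0:ℝ)..(2 * π), F (w * circleMap 0 1 t) * c t)
      (Metric.ball 0 ρ) := by
  have hmem : ∀ w ∈ Metric.ball (0 : ℂ) ρ, ∀ t, w * circleMap 0 1 t ∈ Metric.closedBall 0 ρ := by
    intro w hw t
    rw [mem_ball_zero_iff] at hw
    rw [mem_closedBall_zero_iff, norm_mul, norm_circleMap_zero]
    simpa using hw.le
  have hsub : Metric.closedBall (0 : ℂ) ρ ⊆ Metric.ball 0 1 := Metric.closedBall_subset_ball hρ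
  have hF' : ContinuousOn (deriv F) (Metric.ball 0 1) :=
    (hF.deriv Metric.isOpen_ball).continuousOn
  obtain ⟨B, hB⟩ := (isCompact_closedBall (0 : ℂ) ρ).exists_bound_of_continuousOn (hF'.mono hsub)
  have hcomp : ∀ {G : ℂ → ℂ}, ContinuousOn G (Metric.ball 0 1) → ∀ w ∈ Metric.ball (0 : ℂ) ρ,
      Continuous fun t => G (w * circleMap 0 1 t) := fun hG w hw =>
    hG.comp_continuous (by fun_prop) fun t => hsub (hmem w hw t)
  intro w₀ hw₀
  refine (intervalIntegral.hasDerivAt_integral_of_dominated_loc_of_deriv_le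
    (F := fun w t => F (w * circleMap 0 1 t) * c t)
    (F' := fun w t => deriv F (w * circleMap 0 1 t) * circleMap 0 1 t * c t)
    (bound := fun t => B * ‖c t‖) (Metric.isOpen_ball.mem_nhds hw₀) ?_ ?_ ?_ ?_ ?_
    ?_).2.differentiableAt.differentiableWithinAt
  · filter_upwards [Metric.isOpen_ball.mem_nhds hw₀] with w hw
    exact ((hcomp hF.continuousOn w hw).mul hc).aestronglyMeasurable
  · exact ((hcomp hF.continuousOn w₀ hw₀).mul hc).intervalIntegrable _ _
  · exact (((hcomp hF' w₀ hw₀).mul (continuous_circleMap 0 1)).mul hc).aestronglyMeasurable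
  · refine Eventually.of_forall fun t _ w hw => ?_
    rw [norm_mul, norm_mul, norm_circleMap_zero, abs_one, mul_one]
    exact mul_le_mul_of_nonneg_right (hB _ (hmem w hw t)) (norm_nonneg _)
  · exact (continuous_const.mul hc.norm).intervalIntegrable _ _
  · refine Eventually.of_forall fun t _ w hw => ?_
    have h₁ := (hF.differentiableAt
      (Metric.isOpen_ball.mem_nhds (hsub (hmem w hw t)))).hasDerivAt
    have h₂ : HasDerivAt (fun w : ℂ => w * circleMap 0 1 t) (circleMap 0 1 t) w := by
      simpa using (hasDerivAt_id w).mul_const (circleMap 0 1 t)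
    exact (h₁.comp w h₂).mul_const (c t)

theorem integral_norm_sq_dilation (F : ℂ → ℂ) (w : ℂ) :
    ∫ t in (0:ℝ)..(2 * π), ‖F (w * circleMap 0 1 t)‖ ^ 2 = 2 * π * circleMeanSq F ‖w‖ := by
  rw [circleMeanSq, circleAverage_eq_integral_add (arg w), smul_eq_mul,
    mul_inv_cancel_left₀ two_pi_pos.ne']
  congr with t
  congr 3
  conv_lhs => rw [← norm_mul_exp_arg_mul_I w]
  simp only [circleMap, zero_add, ofReal_one, one_mul, ofReal_add, add_mul, Complex.exp_add]
  ring

/-- The circle means of `‖F‖²` increase with the radius when `F` is holomorphic. -/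
theorem circleMeanSq_monotoneOn {F : ℂ → ℂ} (hF : DifferentiableOn ℂ F (Metric.ball 0 1)) :
    MonotoneOn (circleMeanSq F) (Set.Ico 0 1) := by
  rintro r ⟨hr0, hr1⟩ R ⟨hR0, hR1⟩ hrR
  rcases hrR.eq_or_lt with rfl | hrR
  · exact le_rfl
  have hcont : ∀ w : ℂ, ‖w‖ < 1 → Continuous fun t => F (w * circleMap 0 1 t) := fun w hw =>
    hF.continuousOn.comp_continuous (by fun_prop) fun t => by
      simpa [mem_ball_zero_iff] using hw
  have hrn : ‖(r : ℂ)‖ = r := by simp [abs_of_nonneg hr0]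
  have hrc := hcont r (hrn.trans_lt hr1)
  set φ : ℂ → ℂ := fun w =>
    ∫ t in (0:ℝ)..(2 * π), F (w * circleMap 0 1 t) * conj (F (r * circleMap 0 1 t)) with hφ
  have hφd : DifferentiableOn ℂ φ (Metric.ball 0 ((R + 1) / 2)) :=
    differentiableOn_integral_dilation hF (continuous_conj.comp hrc) (by linarith)
  have hφr : φ r = ((2 * π * circleMeanSq F r : ℝ) : ℂ) := by
    have := integral_norm_sq_dilation F r
    rw [hrn] at this
    rw [hφ, ← this, ← intervalIntegral.integral_ofReal]
    simp only [mul_conj, normSq_eq_norm_sq]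
  have hbound : ∀ w ∈ frontier (Metric.ball (0 : ℂ) R),
      ‖φ w‖ ≤ (2 * π * circleMeanSq F R + 2 * π * circleMeanSq F r) / 2 := by
    intro w hw
    rw [frontier_ball _ (hr0.trans_lt hrR).ne', mem_sphere_zero_iff_norm] at hw
    have hwc := hcont w (hw.trans_lt hR1)
    have h₁ := integral_norm_sq_dilation F w
    have h₂ := integral_norm_sq_dilation F r
    rw [hw] at h₁
    rw [hrn] at h₂
    have hwi : Continuous fun t => ‖F (w * circleMap 0 1 t)‖ ^ 2 := hwc.norm.pow 2
    have hri : Continuous fun t => ‖F (r * circleMap 0 1 t)‖ ^ 2 := hrc.norm.pow 2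
    rw [← h₁, ← h₂, ← intervalIntegral.integral_add (hwi.intervalIntegrable _ _)
      (hri.intervalIntegrable _ _), ← intervalIntegral.integral_div]
    refine intervalIntegral.norm_integral_le_of_norm_le two_pi_pos.le
      (Eventually.of_forall fun t _ => ?_)
      (((hwi.add hri).div_const 2).intervalIntegrable _ _)
    rw [norm_mul, RCLike.norm_conj]
    nlinarith [sq_nonneg (‖F (w * circleMap 0 1 t)‖ - ‖F (r * circleMap 0 1 t)‖)]
  have hmax := Complex.norm_le_of_forall_mem_frontier_norm_le Metric.isBounded_ball
    (hφd.diffContOnCl_ball (Metric.closedBall_subset_ball (by linarith))) hbound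
    (subset_closure (mem_ball_zero_iff.2 (hrn.trans_lt hrR)))
  rw [hφr, norm_real] at hmax
  have := (le_abs_self _).trans hmax
  nlinarith [two_pi_pos]

theorem IsH2D.tendsto_circleMeanSq {F : ℂ → ℂ} (hF : IsH2D F) :
    Tendsto (circleMeanSq F) (𝓝[<] 1) (𝓝 (H2NormSq F)) := by
  have hbdd := hF.2
  simp only [circleMeanSq_eq_integral] at hbdd
  have hsup : H2NormSq F = ⨆ r : Set.Ico (0 : ℝ) 1, circleMeanSq F r := by
    simp only [H2NormSq, circleMeanSq_eq_integral]
  rw [hsup]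
  refine tendsto_order.2 ⟨fun b hb => ?_, fun b hb => ?_⟩
  · have : Nonempty (Set.Ico (0 : ℝ) 1) := ⟨⟨0, by norm_num⟩⟩
    obtain ⟨⟨r, hr⟩, hbr⟩ := exists_lt_of_lt_ciSup hb
    filter_upwards [Ioo_mem_nhdsLT hr.2] with s hs
    exact hbr.trans_le
      (circleMeanSq_monotoneOn hF.1 hr ⟨hr.1.trans hs.1.le, hs.2⟩ hs.1.le)
  · filter_upwards [Ioo_mem_nhdsLT zero_lt_one] with s hs
    exact (le_ciSup hbdd ⟨s, hs.1.le, hs.2⟩).trans_lt hb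

theorem isH2D_and_H2NormSq_eq_of_tendsto {F : ℂ → ℂ}
    (hF : DifferentiableOn ℂ F (Metric.ball 0 1)) {L : ℝ}
    (hL : Tendsto (circleMeanSq F) (𝓝[<] 1) (𝓝 L)) : IsH2D F ∧ H2NormSq F = L := by
  have hle : ∀ r ∈ Set.Ico (0 : ℝ) 1, circleMeanSq F r ≤ L := fun r hr => by
    refine ge_of_tendsto hL ?_
    filter_upwards [Ioo_mem_nhdsLT hr.2] with s hs
    exact circleMeanSq_monotoneOn hF hr ⟨hr.1.trans hs.1.le, hs.2⟩ hs.1.le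
  have hH : IsH2D F := by
    refine ⟨hF, L, ?_⟩
    rintro _ ⟨r, rfl⟩
    simpa only [circleMeanSq_eq_integral] using hle r r.2
  exact ⟨hH, tendsto_nhds_unique hH.tendsto_circleMeanSq hL⟩

theorem one_sub_conj_mul_ne_zero {a z : ℂ} (ha : ‖a‖ < 1) (hz : ‖z‖ ≤ 1) :
    1 - conj a * z ≠ 0 := by
  intro h
  have h₁ : ‖conj a * z‖ = 1 := by rw [← sub_eq_zero.1 h, norm_one]
  rw [norm_mul, RCLike.norm_conj] at h₁
  nlinarith [norm_nonneg a, norm_nonneg z]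

theorem differentiableOn_szego {a : ℂ} (ha : ‖a‖ < 1) :
    DifferentiableOn ℂ (szego a) (Metric.ball 0 1) := by
  unfold szego
  refine (differentiableOn_const _).div (by fun_prop) fun z hz => ?_
  exact one_sub_conj_mul_ne_zero ha (mem_ball_zero_iff.1 hz).le

/-- The reproducing property of the Szegő kernel on the circle of radius `r`, for the kernel
dilated by `s`. -/
theorem circleAverage_mul_conj_szego {G : ℂ → ℂ} (hG : DifferentiableOn ℂ G (Metric.ball 0 1))
    {a : ℂ} (ha : ‖a‖ < 1) {r s : ℝ} (hr0 : 0 < r) (hr1 : r < 1) (hs0 : 0 < s)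
    (hrs : r * s ≤ 1) :
    circleAverage (fun z => G z * conj (szego a ((s : ℂ) * z))) 0 r =
      (√(1 - ‖a‖ ^ 2) : ℂ) * G ((r : ℂ) ^ 2 * s * a) := by
  have hG' : DiffContOnCl ℂ G (Metric.ball 0 |r|) :=
    hG.diffContOnCl_ball (Metric.closedBall_subset_ball (by rwa [abs_of_pos hr0]))
  have hw : (r : ℂ) ^ 2 * s * a ∈ Metric.ball (0 : ℂ) |r| := by
    rw [mem_ball_zero_iff, norm_mul, norm_mul, norm_pow, norm_real, norm_real, Real.norm_eq_abs,
      Real.norm_eq_abs, abs_of_pos hr0, abs_of_pos hs0]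
    have : r * s * ‖a‖ < 1 := by nlinarith [mul_pos hr0 hs0, norm_nonneg a]
    nlinarith
  rw [← hG'.circleAverage_smul_div hw, ← smul_eq_mul, ← circleAverage_fun_smul]
  refine circleAverage_congr_sphere fun z hz => ?_
  rw [mem_sphere_zero_iff_norm, abs_of_pos hr0] at hz
  have hz0 : z ≠ 0 := norm_pos_iff.1 (hz ▸ hr0)
  have hzz : z * conj z = (r : ℂ) ^ 2 := by
    rw [mul_conj, normSq_eq_norm_sq, hz, ofReal_pow]
  have hsz : ‖(s : ℂ) * z‖ ≤ 1 := by
    rwa [norm_mul, norm_real, Real.norm_eq_abs, abs_of_pos hs0, hz, mul_comm]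
  have hD : 1 - a * (s * conj z) ≠ 0 := by
    have := one_sub_conj_mul_ne_zero ha hsz
    rw [← map_ne_zero (starRingEnd ℂ)] at this
    simpa using this
  have hzw : z - (r : ℂ) ^ 2 * s * a = z * (1 - a * (s * conj z)) := by
    rw [← hzz]; ring
  simp only [szego, map_div₀, map_sub, map_mul, map_one, conj_conj, conj_ofReal, smul_eq_mul,
    sub_zero, hzw]
  field_simp

theorem circleMeanSq_sub_const_mul {G E : ℂ → ℂ} (hG : ContinuousOn G (Metric.ball 0 1))
    (hE : ContinuousOn E (Metric.ball 0 1)) (c : ℂ) {r : ℝ} (hr : |r| < 1) :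
    circleMeanSq (fun z => G z - c * E z) r = circleMeanSq G r -
      2 * (conj c * circleAverage (fun z => G z * conj (E z)) 0 r).re +
      ‖c‖ ^ 2 * (circleAverage (fun z => E z * conj (E z)) 0 r).re := by
  have hEc : ContinuousOn (fun z => conj (E z)) (Metric.ball 0 1) :=
    continuous_conj.comp_continuousOn hE
  have h₁ : CircleIntegrable (fun z => ‖G z‖ ^ 2) 0 r :=
    (hG.norm.pow 2).circleIntegrable_of_ball hr
  have c₂ : ContinuousOn (fun z => conj c * (G z * conj (E z))) (Metric.ball 0 1) :=
    continuousOn_const.mul (hG.mul hEc)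
  have c₃ : ContinuousOn (fun z => E z * conj (E z)) (Metric.ball 0 1) := hE.mul hEc
  have h₂ : CircleIntegrable (fun z => (2 : ℝ) • (conj c * (G z * conj (E z))).re) 0 r :=
    ((continuous_re.comp_continuousOn c₂).const_smul (2 : ℝ)).circleIntegrable_of_ball hr
  have h₃ : CircleIntegrable (fun z => ‖c‖ ^ 2 • (E z * conj (E z)).re) 0 r :=
    ((continuous_re.comp_continuousOn c₃).const_smul (‖c‖ ^ 2)).circleIntegrable_of_ball hr
  have h₁₂ : CircleIntegrable
      (fun z => ‖G z‖ ^ 2 - (2 : ℝ) • (conj c * (G z * conj (E z))).re) 0 r := h₁.sub h₂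
  have e₂ : circleAverage (fun z => (conj c * (G z * conj (E z))).re) 0 r = _ :=
    reCLM.circleAverage_comp_comm (c₂.circleIntegrable_of_ball hr)
  have e₃ : circleAverage (fun z => (E z * conj (E z)).re) 0 r = _ :=
    reCLM.circleAverage_comp_comm (c₃.circleIntegrable_of_ball hr)
  calc circleMeanSq (fun z => G z - c * E z) r
      = circleAverage (fun z => ‖G z‖ ^ 2 - (2 : ℝ) • (conj c * (G z * conj (E z))).re +
          ‖c‖ ^ 2 • (E z * conj (E z)).re) 0 r := by
        refine circleAverage_congr_sphere fun z _ => ?_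
        simp only [← normSq_eq_norm_sq, normSq_apply, sub_re, sub_im, mul_re, mul_im, conj_re,
          conj_im, smul_eq_mul]
        ring
    _ = _ := by
        rw [circleAverage_fun_add h₁₂ h₃, circleAverage_fun_sub h₁ h₂, circleAverage_fun_smul,
          circleAverage_fun_smul, e₂, e₃, ← smul_eq_mul (conj c), ← circleAverage_fun_smul]
        rfl

theorem circleMeanSq_le_of_le {G H : ℂ → ℂ} (hG : ContinuousOn G (Metric.ball 0 1))
    (hH : ContinuousOn H (Metric.ball 0 1)) {C r : ℝ} (hr : |r| < 1)
    (h : ∀ z : ℂ, ‖z‖ = |r| → ‖H z‖ ^ 2 ≤ C * ‖G z‖ ^ 2) :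
    circleMeanSq H r ≤ C * circleMeanSq G r := by
  rw [circleMeanSq, circleMeanSq, ← smul_eq_mul, ← circleAverage_fun_smul]
  exact circleAverage_mono ((hH.norm.pow 2).circleIntegrable_of_ball hr)
    ((continuousOn_const.mul (hG.norm.pow 2)).circleIntegrable_of_ball hr)
    fun z hz => h z (mem_sphere_zero_iff_norm.1 hz)

theorem norm_one_sub_conj_mul_sq (a z : ℂ) :
    ‖1 - conj a * z‖ ^ 2 = ‖z - a‖ ^ 2 + (1 - ‖z‖ ^ 2) * (1 - ‖a‖ ^ 2) := by
  simp only [← normSq_eq_norm_sq, normSq_apply, sub_re, sub_im, mul_re, mul_im, one_re, one_im,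
    conj_re, conj_im]
  ring

/-- Dividing by a Blaschke factor does not change the limit of the circle means. -/
theorem tendsto_circleMeanSq_of_blaschke {g h : ℂ → ℂ} (hg : ContinuousOn g (Metric.ball 0 1))
    (hh : ContinuousOn h (Metric.ball 0 1)) {a : ℂ} (ha : ‖a‖ < 1)
    (hgh : ∀ z ∈ Metric.ball (0 : ℂ) 1, h z * (z - a) = g z * (1 - conj a * z)) {L : ℝ}
    (hL : Tendsto (circleMeanSq g) (𝓝[<] 1) (𝓝 L)) :
    Tendsto (circleMeanSq h) (𝓝[<] 1) (𝓝 L) := by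
  have hlim : Tendsto (fun r : ℝ => (1 + (1 - r ^ 2) / (r - ‖a‖) ^ 2) * circleMeanSq g r)
      (𝓝[<] 1) (𝓝 L) := by
    have : ContinuousAt (fun r : ℝ => 1 + (1 - r ^ 2) / (r - ‖a‖) ^ 2) 1 := by
      have : ((1 : ℝ) - ‖a‖) ^ 2 ≠ 0 := pow_ne_zero _ (by linarith)
      fun_prop (disch := assumption)
    simpa using (this.tendsto.mono_left nhdsWithin_le_nhds).mul hL
  refine tendsto_of_tendsto_of_tendsto_of_le_of_le' hL hlim ?_ ?_
  all_goals
    filter_upwards [Ioo_mem_nhdsLT ha] with r hr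
    have hr0 : 0 < r := (norm_nonneg a).trans_lt hr.1
    have hr1 : |r| < 1 := by rw [abs_of_pos hr0]; exact hr.2
    have key : ∀ z : ℂ, ‖z‖ = |r| → 0 < (r - ‖a‖) ^ 2 ∧ (r - ‖a‖) ^ 2 ≤ ‖z - a‖ ^ 2 ∧
        ‖h z‖ ^ 2 * ‖z - a‖ ^ 2 = ‖g z‖ ^ 2 * (‖z - a‖ ^ 2 + (1 - r ^ 2) * (1 - ‖a‖ ^ 2)) := by
      intro z hz
      have h₁ := norm_sub_norm_le z a
      have h₂ := congrArg (fun w => ‖w‖ ^ 2) (hgh z (mem_ball_zero_iff.2 (hz ▸ hr1)))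
      simp only [norm_mul, mul_pow, norm_one_sub_conj_mul_sq, hz, sq_abs] at h₂
      rw [hz, abs_of_pos hr0] at h₁
      exact ⟨by nlinarith [hr.1], pow_le_pow_left₀ (by linarith [hr.1]) h₁ 2, h₂⟩
    have hA : 0 ≤ 1 - r ^ 2 := by nlinarith [hr.2]
    have hB : 0 ≤ 1 - ‖a‖ ^ 2 := by nlinarith [norm_nonneg a]
  · rw [← one_mul (circleMeanSq h r)]
    refine circleMeanSq_le_of_le hh hg hr1 fun z hz => ?_
    obtain ⟨h₁, h₂, h₃⟩ := key z hz
    have := mul_nonneg (sq_nonneg ‖g z‖) (mul_nonneg hA hB)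
    refine le_of_mul_le_mul_right ?_ (h₁.trans_le h₂)
    linarith
  · refine circleMeanSq_le_of_le hg hh hr1 fun z hz => ?_
    obtain ⟨h₁, h₂, h₃⟩ := key z hz
    refine le_of_mul_le_mul_right ?_ (h₁.trans_le h₂)
    have h₄ : (1 - r ^ 2) * (1 - ‖a‖ ^ 2) ≤ (1 - r ^ 2) / (r - ‖a‖) ^ 2 * ‖z - a‖ ^ 2 := by
      rw [div_mul_eq_mul_div, le_div_iff₀ h₁, mul_assoc]
      refine mul_le_mul_of_nonneg_left ?_ hA
      nlinarith [sq_nonneg ‖a‖]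
    have := mul_le_mul_of_nonneg_left h₄ (sq_nonneg ‖g z‖)
    linarith

theorem sqrt_mul_szego_self {a : ℂ} (ha : ‖a‖ < 1) :
    (√(1 - ‖a‖ ^ 2) : ℂ) * szego a a = 1 := by
  have hpos : 0 < 1 - ‖a‖ ^ 2 := by nlinarith [norm_nonneg a]
  have hden : 1 - conj a * a = ((1 - ‖a‖ ^ 2 : ℝ) : ℂ) := by
    rw [mul_comm, mul_conj, normSq_eq_norm_sq]; push_cast; rfl
  rw [szego, hden, ← mul_div_assoc, ← ofReal_mul, Real.mul_self_sqrt hpos.le,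
    div_self (ofReal_ne_zero.2 hpos.ne')]

theorem tendsto_comp_mul_of_tendsto_one {G : ℂ → ℂ} (hG : ContinuousOn G (Metric.ball 0 1))
    {a : ℂ} (ha : ‖a‖ < 1) {u : ℝ → ℂ} (hu : Tendsto u (𝓝[<] 1) (𝓝 1)) :
    Tendsto (fun r => G (u r * a)) (𝓝[<] 1) (𝓝 (G a)) := by
  have h₁ := hG.continuousAt (Metric.isOpen_ball.mem_nhds (mem_ball_zero_iff.2 ha))
  refine h₁.tendsto.comp ?_
  simpa using hu.mul_const a

/-- On circles of radius `r → 1`, the pairing with `szego a` tends to the value given by the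
reproducing property. -/
theorem tendsto_circleAverage_mul_conj_szego {G : ℂ → ℂ}
    (hG : DifferentiableOn ℂ G (Metric.ball 0 1)) {a : ℂ} (ha : ‖a‖ < 1) :
    Tendsto (fun r : ℝ => circleAverage (fun z => G z * conj (szego a z)) 0 r) (𝓝[<] 1)
      (𝓝 ((√(1 - ‖a‖ ^ 2) : ℂ) * G a)) := by
  have hu : Tendsto (fun r : ℝ => (r : ℂ) ^ 2) (𝓝[<] 1) (𝓝 1) := by
    have : ContinuousAt (fun r : ℝ => (r : ℂ) ^ 2) 1 := by fun_prop
    simpa using this.tendsto.mono_left nhdsWithin_le_nhds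
  refine ((tendsto_comp_mul_of_tendsto_one hG.continuousOn ha hu).const_mul _).congr' ?_
  filter_upwards [Ioo_mem_nhdsLT zero_lt_one] with r hr
  have := circleAverage_mul_conj_szego hG ha hr.1 hr.2 one_pos (by linarith [hr.2])
  simpa using this.symm

theorem tendsto_circleMeanSq_sub_projection {F : ℂ → ℂ} (hF : IsH2D F) {a : ℂ} (ha : ‖a‖ < 1) :
    Tendsto (circleMeanSq fun z => F z - ((√(1 - ‖a‖ ^ 2) : ℂ) * F a) * szego a z) (𝓝[<] 1)
      (𝓝 (H2NormSq F - (1 - ‖a‖ ^ 2) * ‖F a‖ ^ 2)) := by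
  have hS := differentiableOn_szego ha
  set c := (√(1 - ‖a‖ ^ 2) : ℂ) * F a with hc
  have hc2 : ‖c‖ ^ 2 = (1 - ‖a‖ ^ 2) * ‖F a‖ ^ 2 := by
    rw [hc, norm_mul, mul_pow, norm_real, Real.norm_eq_abs, sq_abs,
      Real.sq_sqrt (by nlinarith [norm_nonneg a])]
  have h₁ := (continuous_re.tendsto _).comp
    ((tendsto_circleAverage_mul_conj_szego hF.1 ha).const_mul (conj c))
  have h₂ := (continuous_re.tendsto _).comp (tendsto_circleAverage_mul_conj_szego hS ha)
  rw [sqrt_mul_szego_self ha, one_re] at h₂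
  rw [← hc, mul_comm, mul_conj, normSq_eq_norm_sq, ofReal_re] at h₁
  have h := (hF.tendsto_circleMeanSq.sub (h₁.const_mul 2)).add (h₂.const_mul (‖c‖ ^ 2))
  rw [show H2NormSq F - 2 * ‖c‖ ^ 2 + ‖c‖ ^ 2 * 1 = H2NormSq F - (1 - ‖a‖ ^ 2) * ‖F a‖ ^ 2 by
    rw [← hc2]; ring] at h
  refine h.congr' ?_
  filter_upwards [Ioo_mem_nhdsLT zero_lt_one] with r hr
  exact (circleMeanSq_sub_const_mul hF.1.continuousOn hS.continuousOn c
    (by rw [abs_of_pos hr.1]; exact hr.2)).symm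

/-- one-step sifting identity of 1-D AFD: for `f ∈ H²(𝔻)` and `a ∈ 𝔻`,
(i) `⟨f, e_a⟩ = √(1-|a|²) f(a)` (the boundary inner product, realized as the limit of the
circle pairings as `r → 1⁻`); (ii) `h(z) = (f(z) - ⟨f,e_a⟩e_a(z))(1 - conj(a)z)/(z-a)`
extends holomorphically across `z = a` and lies in `H²(𝔻)`; and
(iii) `‖f‖² = (1-|a|²)|f(a)|² + ‖h‖²`. -/
theorem oneD_AFD_sifting (F : ℂ → ℂ) (hF : IsH2D F) (a : ℂ) (ha : ‖a‖ < 1) :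
    Filter.Tendsto
      (fun r : ℝ => (1 / (2 * (π : ℂ))) *
        ∫ t in (0:ℝ)..(2 * π), F ((r : ℂ) * bp t) * (starRingEnd ℂ) (szego a (bp t)))
      (nhdsWithin 1 (Set.Iio 1))
      (nhds ((Real.sqrt (1 - ‖a‖ ^ 2) : ℂ) * F a)) ∧
    ∃ h : ℂ → ℂ,
      DifferentiableOn ℂ h (Metric.ball 0 1) ∧ IsH2D h ∧
      (∀ z ∈ Metric.ball (0 : ℂ) 1, z ≠ a →
        h z = (F z - ((Real.sqrt (1 - ‖a‖ ^ 2) : ℂ) * F a) * szego a z) *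
          (1 - (starRingEnd ℂ) a * z) / (z - a)) ∧
      H2NormSq F = (1 - ‖a‖ ^ 2) * ‖F a‖ ^ 2 + H2NormSq h := by
  refine ⟨?_, ?_⟩
  · have hu : Tendsto (fun r : ℝ => (r : ℂ)) (𝓝[<] 1) (𝓝 1) := by
      simpa using (continuous_ofReal.tendsto (1 : ℝ)).mono_left nhdsWithin_le_nhds
    refine ((tendsto_comp_mul_of_tendsto_one hF.1.continuousOn ha hu).const_mul _).congr' ?_
    filter_upwards [Ioo_mem_nhdsLT zero_lt_one] with r hr
    have hr0 : (r : ℂ) ≠ 0 := ofReal_ne_zero.2 hr.1.ne'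
    have := circleAverage_mul_conj_szego hF.1 ha hr.1 hr.2 (inv_pos.2 hr.1)
      (mul_inv_cancel₀ hr.1.ne').le
    rw [circleAverage_def, ofReal_inv, sq (r : ℂ), mul_inv_cancel_right₀ hr0] at this
    rw [← this]
    simp only [← bp_mul_eq_circleMap, inv_mul_cancel_left₀ hr0, real_smul]
    push_cast
    rw [one_div]
  · set g : ℂ → ℂ := fun z => F z - ((√(1 - ‖a‖ ^ 2) : ℂ) * F a) * szego a z with hg
    have hgd : DifferentiableOn ℂ g (Metric.ball 0 1) :=
      hF.1.sub ((differentiableOn_szego ha).const_mul _)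
    have hga : g a = 0 := by
      rw [hg]
      linear_combination (-F a) * sqrt_mul_szego_self ha
    have hhd : DifferentiableOn ℂ (fun z => dslope g a z * (1 - conj a * z)) (Metric.ball 0 1) :=
      ((differentiableOn_dslope (Metric.isOpen_ball.mem_nhds (mem_ball_zero_iff.2 ha))).2
        hgd).mul (by fun_prop)
    have hmul : ∀ z, dslope g a z * (1 - conj a * z) * (z - a) = g z * (1 - conj a * z) := by
      intro z
      have := sub_smul_dslope g a z
      rw [hga, sub_zero, smul_eq_mul] at this
      rw [← this]; ring
    obtain ⟨hH, hN⟩ := isH2D_and_H2NormSq_eq_of_tendsto hhd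
      (tendsto_circleMeanSq_of_blaschke hgd.continuousOn hhd.continuousOn ha
        (fun z _ => hmul z) (tendsto_circleMeanSq_sub_projection hF ha))
    refine ⟨_, hhd, hH, fun z _ hza => ?_, by rw [hN]; ring⟩
    rw [eq_div_iff (sub_ne_zero.2 hza)]
    exact hmul z
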